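/- Let Γ : [n+r] → [n] × [r] be a maximal chain. Then Im(bs_Γ) ∪ Im(fs_Γ) = [n+r] and Im(bs_Γ) ∩ Im(fs_Γ) = {0}. -/

import Mathlib

open Finset

/-- `bs_Γ(i) = min { j | (Γ j).fst = i }` (defined as `0` if the set is empty;
for maximal chains the set is always nonempty since `fst ∘ Γ` is surjective). -/
def bs {p n r : ℕ} (Γ : Fin (p + 1) → Fin (n + 1) × Fin (r + 1))
    (i : Fin (n + 1)) : Fin (p + 1) :=
  if h : (univ.filter fun j => (Γ j).1 = i).Nonempty
  then (univ.filter fun j => (Γ j).1 = i).min' h else 0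

/-- `fs_Γ(i) = min { j | (Γ j).snd ≥ i }` (defined as `0` if the set is empty;
for maximal chains the set is always nonempty). -/
def fs {p n r : ℕ} (Γ : Fin (p + 1) → Fin (n + 1) × Fin (r + 1))
    (i : Fin (r + 1)) : Fin (p + 1) :=
  if h : (univ.filter fun j => i ≤ (Γ j).2).Nonempty
  then (univ.filter fun j => i ≤ (Γ j).2).min' h else 0

theorem chain_sum (n r : ℕ)
    (Γ : Fin (n + r + 1) → Fin (n + 1) × Fin (r + 1))
    (hmono : Monotone Γ) (hinj : Function.Injective Γ) (j : Fin (n + r + 1)) :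
    (Γ j).1.val + (Γ j).2.val = j.val := by
  have hlt : ∀ a b : Fin (n + r + 1), a < b →
      (Γ a).1.val + (Γ a).2.val < (Γ b).1.val + (Γ b).2.val := by
    intro a b hab
    have h1 := hmono hab.le
    have h2 : Γ a ≠ Γ b := fun h => hab.ne (hinj h)
    have h3 : (Γ a).1.val ≤ (Γ b).1.val := h1.1
    have h4 : (Γ a).2.val ≤ (Γ b).2.val := h1.2
    by_contra hc
    apply h2
    apply Prod.ext <;> apply Fin.ext <;> omega
  have lo : ∀ m : ℕ, ∀ h : m < n + r + 1, m ≤ (Γ ⟨m, h⟩).1.val + (Γ ⟨m, h⟩).2.val := by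
    intro m
    induction m with
    | zero => intro h; omega
    | succ m ih =>
      intro h
      have := ih (by omega)
      have := hlt ⟨m, by omega⟩ ⟨m + 1, h⟩ (by simp [Fin.lt_def])
      omega
  have hi : ∀ d m : ℕ, ∀ h : m < n + r + 1, m + d = n + r →
      (Γ ⟨m, h⟩).1.val + (Γ ⟨m, h⟩).2.val ≤ m := by
    intro d
    induction d with
    | zero => intro m h e; omega
    | succ d ih =>
      intro m h e
      have := ih (m + 1) (by omega) (by omega)
      have := hlt ⟨m, h⟩ ⟨m + 1, by omega⟩ (by simp [Fin.lt_def])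
      omega
  have := lo j.val j.isLt
  have := hi (n + r - j.val) j.val j.isLt (by omega)
  simp only [Fin.eta] at *
  omega

theorem bs_eq_of {p n r : ℕ} (Γ : Fin (p + 1) → Fin (n + 1) × Fin (r + 1))
    (i : Fin (n + 1)) (j : Fin (p + 1)) (h1 : (Γ j).1 = i)
    (h2 : ∀ k, (Γ k).1 = i → j ≤ k) : bs Γ i = j := by
  have hne : (univ.filter fun j => (Γ j).1 = i).Nonempty := ⟨j, by simp [h1]⟩
  rw [bs, dif_pos hne]
  apply le_antisymm
  · exact Finset.min'_le _ _ (by simp [h1])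
  · apply Finset.le_min'
    intro k hk
    exact h2 k (by simpa using hk)

theorem fs_eq_of {p n r : ℕ} (Γ : Fin (p + 1) → Fin (n + 1) × Fin (r + 1))
    (i : Fin (r + 1)) (j : Fin (p + 1)) (h1 : i ≤ (Γ j).2)
    (h2 : ∀ k, i ≤ (Γ k).2 → j ≤ k) : fs Γ i = j := by
  have hne : (univ.filter fun j => i ≤ (Γ j).2).Nonempty := ⟨j, by simp [h1]⟩
  rw [fs, dif_pos hne]
  apply le_antisymm
  · exact Finset.min'_le _ _ (by simp [h1])
  · apply Finset.le_min'
    intro k hk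
    exact h2 k (by simpa using hk)

theorem bs_spec {p n r : ℕ} (Γ : Fin (p + 1) → Fin (n + 1) × Fin (r + 1))
    (i : Fin (n + 1)) (h0 : bs Γ i ≠ 0) :
    (Γ (bs Γ i)).1 = i ∧ ∀ k, (Γ k).1 = i → bs Γ i ≤ k := by
  by_cases hne : (univ.filter fun j => (Γ j).1 = i).Nonempty
  · have e : bs Γ i = (univ.filter fun j => (Γ j).1 = i).min' hne := by rw [bs, dif_pos hne]
    rw [e]
    exact ⟨by simpa using Finset.min'_mem _ hne, fun k hk => Finset.min'_le _ _ (by simp [hk])⟩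
  · exact absurd (by rw [bs, dif_neg hne]) h0

theorem fs_spec {p n r : ℕ} (Γ : Fin (p + 1) → Fin (n + 1) × Fin (r + 1))
    (i : Fin (r + 1)) (h0 : fs Γ i ≠ 0) :
    i ≤ (Γ (fs Γ i)).2 ∧ ∀ k, i ≤ (Γ k).2 → fs Γ i ≤ k := by
  by_cases hne : (univ.filter fun j => i ≤ (Γ j).2).Nonempty
  · have e : fs Γ i = (univ.filter fun j => i ≤ (Γ j).2).min' hne := by rw [fs, dif_pos hne]
    rw [e]
    exact ⟨by simpa using Finset.min'_mem _ hne, fun k hk => Finset.min'_le _ _ (by simp [hk])⟩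
  · exact absurd (by rw [fs, dif_neg hne]) h0

/-- Let `Γ : [n+r] → [n] × [r]` be a maximal chain.  Then
`Im(bs_Γ) ∪ Im(fs_Γ) = [n+r]` and `Im(bs_Γ) ∩ Im(fs_Γ) = {0}`. -/
theorem range_bs_union_inter_range_fs (n r : ℕ)
    (Γ : Fin (n + r + 1) → Fin (n + 1) × Fin (r + 1))
    (hmono : Monotone Γ) (hinj : Function.Injective Γ) :
    Set.range (bs Γ) ∪ Set.range (fs Γ) = Set.univ ∧
    Set.range (bs Γ) ∩ Set.range (fs Γ) = {0} := by
  have hs := chain_sum n r Γ hmono hinj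
  have hb0 : bs Γ 0 = 0 := bs_eq_of Γ 0 0
    (by apply Fin.ext; have := hs 0; simp only [Fin.val_zero] at *; omega)
    (fun k _ => Fin.zero_le k)
  have hf0 : fs Γ 0 = 0 := fs_eq_of Γ 0 0 (Fin.zero_le _) (fun k _ => Fin.zero_le k)
  have hm1 : ∀ a b : Fin (n + r + 1), a ≤ b → (Γ a).1.val ≤ (Γ b).1.val :=
    fun a b h => (hmono h).1
  have hm2 : ∀ a b : Fin (n + r + 1), a ≤ b → (Γ a).2.val ≤ (Γ b).2.val :=
    fun a b h => (hmono h).2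
  have hpred : ∀ j : Fin (n + r + 1), j ≠ 0 → ∃ k : Fin (n + r + 1), k.val + 1 = j.val := by
    intro j hj
    have : j.val ≠ 0 := fun h => hj (Fin.ext h)
    exact ⟨⟨j.val - 1, by omega⟩, by simp only; omega⟩
  constructor
  · rw [Set.eq_univ_iff_forall]
    intro j
    by_cases hj : j = 0
    · exact Or.inl ⟨0, by rw [hb0, hj]⟩
    obtain ⟨k, hk⟩ := hpred j hj
    have h1 := hm1 k j (by rw [Fin.le_def]; omega)
    have h2 := hm2 k j (by rw [Fin.le_def]; omega)
    have h3 := hs k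
    have h4 := hs j
    by_cases hc : (Γ k).1.val < (Γ j).1.val
    · refine Or.inl ⟨(Γ j).1, bs_eq_of Γ _ _ rfl fun l hl => ?_⟩
      by_contra hlt
      have h5 := hm1 l k (by rw [Fin.le_def] at *; omega)
      rw [hl] at h5
      omega
    · refine Or.inr ⟨(Γ j).2, fs_eq_of Γ _ _ le_rfl fun l hl => ?_⟩
      by_contra hlt
      have h5 := hm2 l k (by rw [Fin.le_def] at *; omega)
      rw [Fin.le_def] at hl
      omega
  · apply Set.Subset.antisymm
    · rintro j ⟨⟨a, ha⟩, ⟨b, hb⟩⟩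
      rw [Set.mem_singleton_iff]
      by_contra hj
      obtain ⟨k, hk⟩ := hpred j hj
      obtain ⟨p1, p2⟩ := bs_spec Γ a (by rw [ha]; exact hj)
      obtain ⟨q1, q2⟩ := fs_spec Γ b (by rw [hb]; exact hj)
      rw [ha] at p1 p2
      rw [hb] at q1 q2
      have h1 := hm1 k j (by rw [Fin.le_def]; omega)
      have h3 := hs k
      have h4 := hs j
      have h5 : (Γ k).1.val ≠ (Γ j).1.val := by
        intro h
        have := p2 k ((Fin.ext h).trans p1)
        rw [Fin.le_def] at this
        omega
      have h6 : ¬ b ≤ (Γ k).2 := by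
        intro h
        have := q2 k h
        rw [Fin.le_def] at this
        omega
      rw [Fin.le_def] at h6 q1
      omega
    · rintro j hj
      rw [Set.mem_singleton_iff] at hj
      exact ⟨⟨0, by rw [hb0, hj]⟩, ⟨0, by rw [hf0, hj]⟩⟩
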